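/- Let {a_n}_{n≥1} be reals with 0 < a_1 ≤ a_2 ≤ … and Σ_{n=1}^∞ 1/a_n² < ∞, let α, β ∈ ℝ, and let f be the entire function f(z) = e^{αz+β} Π_{n=1}^∞ (1 + z/a_n) e^{-z/a_n} (a real entire function of genus 1 with only negative zeros and f(0) > 0). For s > 0 define h(z) = log f(z) - log f(z+s) = -αs + Σ_{n=1}^∞ ( Log(1 + z/a_n) - Log(1 + (z+s)/a_n) + s/a_n ) for z ∈ ℂ \ (-∞,0], where Log is the principal logarithm. Then h is a Pick function: Im h(z) ≥ 0 whenever Im z > 0. Moreover lim_{y→∞} h(iy)/(iy) = 0. -/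

import Mathlib

open MeasureTheory Filter Set

/-- The Laplace transform of `g`. -/
noncomputable def LaplaceTransform (g : ℝ → ℝ) (x : ℝ) : ℝ :=
  ∫ t in Set.Ioi (0:ℝ), Real.exp (-x * t) * g t

/-- `f` is completely monotonic on `(0,∞)`. -/
def CompletelyMonotonic (f : ℝ → ℝ) : Prop :=
  (∀ x : ℝ, 0 < x → ContDiffAt ℝ (⊤ : ℕ∞) f x) ∧
  ∀ (n : ℕ) (x : ℝ), 0 < x → 0 ≤ (-1 : ℝ) ^ n * iteratedDeriv n f x

/-- `f` is logarithmically completely monotonic on `(0,∞)`. -/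
def LogCompletelyMonotonic (f : ℝ → ℝ) : Prop :=
  (∀ x : ℝ, 0 < x → 0 < f x) ∧ (∀ x : ℝ, 0 < x → ContDiffAt ℝ (⊤ : ℕ∞) f x) ∧
  CompletelyMonotonic (fun x => -deriv f x / f x)

/-- `f` is a generalized Stieltjes function of order `lam` on `(0,∞)`. -/
def IsGenStieltjes (lam : ℝ) (f : ℝ → ℝ) : Prop :=
  ∃ (μ : Measure ℝ) (c : ℝ), 0 ≤ c ∧ μ (Set.Iio 0) = 0 ∧
    ∀ x : ℝ, 0 < x →
      Integrable (fun t => (x + t) ^ (-lam)) μ ∧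
      f x = (∫ t, (x + t) ^ (-lam) ∂μ) + c

/-- Nielsen's beta function. -/
noncomputable def nielsenBeta (x : ℝ) : ℝ :=
  ∫ t in Set.Ioi (0:ℝ), Real.exp (-x * t) / (1 + Real.exp (-t))

theorem aux_arg (w : ℂ) (hw : 0 < w.im) (r : ℝ) (hr : 0 ≤ r) :
    Complex.arg (w + r) ≤ Complex.arg w := by
  by_contra hlt
  push Not at hlt
  have h1 : 0 ≤ Complex.arg w := Complex.arg_nonneg_iff.2 hw.le
  have h2 : Complex.arg (w + r) < Real.pi := by
    refine lt_of_le_of_ne (Complex.arg_le_pi _) ?_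
    intro h
    have := (Complex.arg_eq_pi_iff.1 h).2
    simp at this
    linarith
  have h3 : 0 < Real.sin (Complex.arg (w + r) - Complex.arg w) :=
    Real.sin_pos_of_pos_of_lt_pi (by linarith) (by linarith)
  have hw0 : w ≠ 0 := by rintro rfl; simp at hw
  have hw1 : w + r ≠ 0 := by
    intro h
    have := congrArg Complex.im h
    simp at this
    linarith
  have n0 : 0 < ‖w‖ := norm_pos_iff.2 hw0
  have n1 : 0 < ‖w + r‖ := norm_pos_iff.2 hw1
  rw [Real.sin_sub, Complex.sin_arg, Complex.sin_arg, Complex.cos_arg hw0, Complex.cos_arg hw1] at h3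
  have h4 : (w + r).im / ‖w + r‖ * (w.re / ‖w‖) - (w + r).re / ‖w + r‖ * (w.im / ‖w‖)
      = -(r * w.im) / (‖w + r‖ * ‖w‖) := by
    field_simp
    simp
    ring
  rw [h4] at h3
  have : -(r * w.im) / (‖w + r‖ * ‖w‖) ≤ 0 :=
    div_nonpos_of_nonpos_of_nonneg (by nlinarith) (by positivity)
  linarith

theorem aux_norm (a s C : ℝ) (ha : 0 < a) (hs : 0 < s) (z : ℂ) (hz : 0 ≤ z.re)
    (hC : ∀ u : ℝ, 0 ≤ u → u ≤ s → ‖1 / ((a : ℂ) + z + u) - 1 / (a : ℂ)‖ ≤ C) :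
    ‖Complex.log (1 + z / (a : ℂ)) - Complex.log (1 + (z + (s : ℂ)) / (a : ℂ))
          + (s / a : ℝ)‖ ≤ C * s := by
  have ha' : (a : ℂ) ≠ 0 := by exact_mod_cast ha.ne'
  have key := norm_image_sub_le_of_norm_deriv_le_segment' (a := 0) (b := s) (C := C)
    (f := fun u : ℝ => Complex.log (1 + (z + (u : ℂ)) / (a : ℂ)) - (u : ℂ) / (a : ℂ))
    (f' := fun u : ℝ => 1 / ((a : ℂ) + z + u) - 1 / (a : ℂ)) ?_ ?_ s (right_mem_Icc.2 hs.le)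
  · rw [← norm_neg]
    rw [sub_zero] at key
    refine le_trans (le_of_eq (congrArg norm ?_)) key
    push_cast
    rw [add_zero]
    ring
  · intro u hu
    have hre : 0 < (1 + (z + (u : ℂ)) / (a : ℂ)).re := by
      simp [Complex.div_ofReal_re]
      have := div_nonneg (add_nonneg hz hu.1) ha.le
      linarith
    have hne : (a : ℂ) + z + u ≠ 0 := by
      intro h
      have := congrArg Complex.re h
      simp at this
      linarith [hu.1]
    have hd : HasDerivAt (fun u : ℝ => (u : ℂ)) 1 u := Complex.ofRealCLM.hasDerivAt
    have e1 := (((hd.const_add z).div_const (a : ℂ)).const_add 1).clog_real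
      (Or.inl hre)
    have e2 := e1.sub (hd.div_const (a : ℂ))
    refine (e2.congr_deriv ?_).hasDerivWithinAt
    have : 1 + (z + (u : ℂ)) / (a : ℂ) ≠ 0 := by
      intro h; rw [h] at hre; simp at hre
    have e3 : 1 + (z + (u : ℂ)) / (a : ℂ) = ((a : ℂ) + z + u) / a := by field_simp; ring
    rw [e3]
    field_simp
  · intro u hu
    exact hC u hu.1 hu.2.le

theorem aux_lower (a : ℝ) (ha : 0 < a) (z : ℂ) (hz : 0 ≤ z.re) (u : ℝ) (hu : 0 ≤ u) :
    a ≤ ‖(a : ℂ) + z + u‖ := by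
  refine le_trans ?_ (Complex.re_le_norm _)
  simp
  linarith

theorem aux_b1 (a s : ℝ) (ha : 0 < a) (hs : 0 < s) (z : ℂ) (hz : 0 ≤ z.re) :
    ‖Complex.log (1 + z / (a : ℂ)) - Complex.log (1 + (z + (s : ℂ)) / (a : ℂ))
          + (s / a : ℝ)‖ ≤ (1 / a + 1 / a) * s := by
  refine aux_norm a s _ ha hs z hz fun u hu _ => ?_
  have := aux_lower a ha z hz u hu
  refine (norm_sub_le _ _).trans (add_le_add ?_ ?_)
  · rw [norm_div, norm_one]
    exact one_div_le_one_div_of_le ha this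
  · simp [abs_of_pos ha]

theorem aux_b2 (a s : ℝ) (ha : 0 < a) (hs : 0 < s) (z : ℂ) (hz : 0 ≤ z.re) :
    ‖Complex.log (1 + z / (a : ℂ)) - Complex.log (1 + (z + (s : ℂ)) / (a : ℂ))
          + (s / a : ℝ)‖ ≤ ((‖z‖ + s) / (a * a)) * s := by
  refine aux_norm a s _ ha hs z hz fun u hu hus => ?_
  have hl := aux_lower a ha z hz u hu
  have ha' : (a : ℂ) ≠ 0 := by exact_mod_cast ha.ne'
  have hne : (a : ℂ) + z + u ≠ 0 := norm_pos_iff.1 (ha.trans_le hl)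
  have e : 1 / ((a : ℂ) + z + u) - 1 / (a : ℂ) = -(z + u) / (((a : ℂ) + z + u) * a) := by
    field_simp
    ring
  rw [e, norm_div, norm_neg, norm_mul]
  have n1 : ‖z + (u : ℂ)‖ ≤ ‖z‖ + s := by
    refine (norm_add_le _ _).trans ?_
    simp [abs_of_nonneg hu, hus]
  have n2 : ‖(a : ℂ)‖ = a := by simp [abs_of_pos ha]
  rw [n2]
  gcongr

/-- Theorem: for a real entire function `f` of genus 1 with only negative zeros `-aₙ` and
`f(0) > 0`, and `s > 0`, the function
`h(z) = log f(z) - log f(z+s) = -αs + Σₙ (Log(1+z/aₙ) - Log(1+(z+s)/aₙ) + s/aₙ)`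
is a Pick function, and `h(iy)/(iy) → 0` as `y → ∞`. -/
theorem stmt16 (a : ℕ → ℝ) (ha : 0 < a 0) (hmono : Monotone a)
    (hsum : Summable (fun n : ℕ => 1 / (a n) ^ 2))
    (α β : ℝ) (f : ℂ → ℂ)
    (hf : ∀ z : ℂ, f z = Complex.exp (α * z + β) *
      ∏' n : ℕ, ((1 + z / (a n : ℂ)) * Complex.exp (-z / (a n : ℂ))))
    (s : ℝ) (hs : 0 < s) (h : ℂ → ℂ)
    (hh : ∀ z : ℂ, ¬(z.im = 0 ∧ z.re ≤ 0) →
      h z = -(α * s : ℂ) + ∑' n : ℕ,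
        (Complex.log (1 + z / (a n : ℂ)) - Complex.log (1 + (z + (s : ℂ)) / (a n : ℂ))
          + (s / a n : ℝ))) :
    (∀ z : ℂ, 0 < z.im → 0 ≤ (h z).im) ∧
    Tendsto (fun y : ℝ => h ((y : ℂ) * Complex.I) / ((y : ℂ) * Complex.I))
      atTop (nhds 0) := by
  have hpos : ∀ n, 0 < a n := fun n => ha.trans_le (hmono (Nat.zero_le n))
  constructor
  · intro z hz
    rw [hh z (fun h => hz.ne' h.1)]
    have hre : (-(α * s : ℂ)).im = 0 := by simp
    rw [Complex.add_im, hre, zero_add]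
    by_cases hS : Summable (fun n : ℕ => (Complex.log (1 + z / (a n : ℂ)) -
        Complex.log (1 + (z + (s : ℂ)) / (a n : ℂ)) + (s / a n : ℝ)))
    · rw [Complex.im_tsum hS]
      refine tsum_nonneg fun n => ?_
      have han := hpos n
      have := aux_arg (1 + z / (a n : ℂ)) (by
        simp only [Complex.add_im, Complex.one_im, Complex.div_ofReal_im, zero_add]
        positivity) (s / a n) (by positivity)
      have e : 1 + z / (a n : ℂ) + ((s / a n : ℝ) : ℂ) = 1 + (z + (s : ℂ)) / (a n : ℂ) := by
        push_cast
        ring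
      rw [e] at this
      rw [Complex.add_im, Complex.sub_im, Complex.log_im, Complex.log_im, Complex.ofReal_im]
      linarith
    · rw [tsum_eq_zero_of_not_summable hS]
      simp
  · have hnorm : ∀ y : ℝ, 0 < y → ‖(y : ℂ) * Complex.I‖ = y := by
      intro y hy
      simp [abs_of_pos hy]
    have hlim : ∀ c : ℝ, Tendsto (fun y : ℝ => c / y) atTop (nhds 0) := fun c =>
      tendsto_const_nhds.div_atTop tendsto_id
    have hT := tendsto_tsum_of_dominated_convergence (𝓕 := atTop)
      (f := fun (y : ℝ) (n : ℕ) => (Complex.log (1 + ((y : ℂ) * Complex.I) / (a n : ℂ)) -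
        Complex.log (1 + ((y : ℂ) * Complex.I + (s : ℂ)) / (a n : ℂ)) + (s / a n : ℝ)) /
          ((y : ℂ) * Complex.I))
      (g := fun _ => 0) (bound := fun n => ((1 + s) * s) * (1 / (a n) ^ 2))
      (hsum.mul_left _) ?_ ?_
    · rw [tsum_zero] at hT
      have h0 : Tendsto (fun y : ℝ => -(α * s : ℂ) / ((y : ℂ) * Complex.I)) atTop (nhds 0) := by
        refine squeeze_zero_norm' ?_ (hlim ‖-(α * s : ℂ)‖)
        filter_upwards [eventually_gt_atTop 0] with y hy
        rw [norm_div, hnorm y hy]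
      have h1 := h0.add hT
      rw [add_zero] at h1
      refine h1.congr' ?_
      filter_upwards [eventually_gt_atTop 0] with y hy
      rw [hh _ (fun h => by have := h.1; simp at this; linarith), add_div, tsum_div_const]
    · intro n
      refine squeeze_zero_norm' ?_ (hlim ((1 / a n + 1 / a n) * s))
      filter_upwards [eventually_gt_atTop 0] with y hy
      rw [norm_div, hnorm y hy]
      gcongr
      exact aux_b1 (a n) s (hpos n) hs _ (by simp)
    · filter_upwards [eventually_ge_atTop 1] with y hy n
      have hy0 : 0 < y := by linarith
      have han := hpos n
      have := aux_b2 (a n) s (hpos n) hs ((y : ℂ) * Complex.I) (by simp)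
      rw [norm_div, hnorm y hy0, div_le_iff₀ hy0]
      rw [hnorm y hy0] at this
      refine this.trans ?_
      have : (1 + s) * s * (1 / a n ^ 2) * y = ((y + s * y) / (a n * a n)) * s := by
        field_simp
      rw [this]
      gcongr
      nlinarith
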